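/- At most one peripheral eigenvalue of the twisted transfer operator: fix d, D ≥ 1 and a tensor A : Fin d → Matrix (Fin D) (Fin D) ℂ whose transfer matrix T is gapped and normalized (1 is a root of multiplicity one of the characteristic polynomial of T and every other root has modulus < 1). Then for every k ≥ 2, the twisted transfer operator T̂_k = (T ⊗ₖ T)^(k−1) * U * (T ⊗ₖ T) * U has at most one characteristic-polynomial root of modulus 1, counted with multiplicity (i.e. the multiset (T̂_k.charpoly.roots.filter (fun z => ‖z‖ = 1)) has cardinality ≤ 1), and every root z of its characteristic polynomial with ‖z‖ = 1 satisfies z = 1. -/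

import Mathlib

open Matrix
open scoped Kronecker Classical

/-- The transfer matrix `T = ∑ i, A i ⊗ₖ (A i).map star` of the MPS tensor `A`. -/
noncomputable def mpsTransfer {d D : ℕ} (A : Fin d → Matrix (Fin D) (Fin D) ℂ) :
    Matrix (Fin D × Fin D) (Fin D × Fin D) ℂ :=
  ∑ i, A i ⊗ₖ (A i).map star

/-- The partial-swap matrix `U` on `(Fin D × Fin D) × (Fin D × Fin D)`. -/
def partialSwap (D : ℕ) :
    Matrix ((Fin D × Fin D) × (Fin D × Fin D)) ((Fin D × Fin D) × (Fin D × Fin D)) ℂ :=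
  fun x y =>
    if x.1.1 = y.1.1 ∧ x.2.1 = y.2.1 ∧ x.1.2 = y.2.2 ∧ x.2.2 = y.1.2 then 1 else 0

/-- The twisted transfer operator `T̂_k = (T ⊗ₖ T)^(k-1) * U * (T ⊗ₖ T) * U`. -/
noncomputable def twistedTransfer {d D : ℕ} (k : ℕ)
    (A : Fin d → Matrix (Fin D) (Fin D) ℂ) :
    Matrix ((Fin D × Fin D) × (Fin D × Fin D)) ((Fin D × Fin D) × (Fin D × Fin D)) ℂ :=
  (mpsTransfer A ⊗ₖ mpsTransfer A) ^ (k - 1) * partialSwap D *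
    (mpsTransfer A ⊗ₖ mpsTransfer A) * partialSwap D

/-!
Write `T̂_k = (T ⊗ T) ^ (k - 1) * (U (T ⊗ T) U)`. Each of the two kinds of factors, together with
`T`, arises from an array `B x y` of `D × D` matrices: the factor is
`∑ y y', E y y' ⊗ E y' y` and `T = ∑ y, E y y`, where `E y y' = ∑ x, B x y ⊗ conj (B x y')`. For
`T ⊗ T` the array is the column `A`, for `U (T ⊗ T) U` it is the row `A`. Such pairs are closed
under products, so `(T̂_k ^ m, T ^ (k * m))` is again one. Taking traces replaces `E` by the Gram
matrix `G y y' = tr (E y y')`, which is positive semidefinite, and hence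
`0 ≤ tr (T̂_k ^ m) = tr (G ^ 2) ≤ (tr G) ^ 2 = (tr (T ^ (k * m))) ^ 2 → 1`.

These traces are the power sums of the eigenvalues of `T̂_k`. By recurrence of the phases on a
torus, for infinitely many `m` all `z ^ m` are almost nonnegative real, so the bound leaves
room for at most one eigenvalue outside the open unit disc, and that one has modulus one. The
`m`-th trace is then asymptotic to `z ^ m`, and its nonnegativity forces `z = 1`.
-/

section SpectralMapping

open Polynomial

variable {K n : Type*} [Field K] [IsAlgClosed K] [Fintype n] [DecidableEq n]

lemma card_roots_charpoly (M : Matrix n n K) : M.charpoly.roots.card = Fintype.card n := by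
  rw [← (IsAlgClosed.splits M.charpoly).natDegree_eq_card_roots, M.charpoly_natDegree_eq_dim]

lemma det_aeval_X_sub_C (M : Matrix n n K) (a : K) :
    (aeval M (X - C a)).det = (M.charpoly.roots.map fun z ↦ z - a).prod := by
  have haeval : aeval M (X - C a) = -(scalar n a - M) := by
    simp [algebraMap_eq_diagonal]
  rw [haeval, det_neg, ← eval_charpoly,
    (IsAlgClosed.splits M.charpoly).eval_eq_prod_roots_of_monic M.charpoly_monic,
    ← card_roots_charpoly M, ← Multiset.card_map (fun z ↦ a - z), ← Multiset.prod_map_neg,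
    Multiset.map_map]
  simp only [Function.comp_apply, neg_sub]

lemma det_aeval_eq_prod_roots_charpoly (M : Matrix n n K) (q : K[X]) :
    (aeval M q).det = (M.charpoly.roots.map fun z ↦ q.eval z).prod := by
  rw [(IsAlgClosed.splits q).eq_prod_roots]
  simp only [map_mul, det_mul, eval_mul, Multiset.prod_map_mul]
  congr 1
  · simp [algebraMap_eq_diagonal, card_roots_charpoly]
  · induction q.roots using Multiset.induction_on with
    | empty => simp
    | cons a s ih =>
      simp only [Multiset.map_cons, Multiset.prod_cons, map_mul, det_mul, eval_mul,
        Multiset.prod_map_mul, ih, det_aeval_X_sub_C, eval_sub, eval_X, eval_C]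

theorem roots_charpoly_aeval (M : Matrix n n K) (q : K[X]) :
    (aeval M q).charpoly.roots = M.charpoly.roots.map fun z ↦ q.eval z := by
  suffices (aeval M q).charpoly =
      ((M.charpoly.roots.map fun z ↦ q.eval z).map fun w ↦ X - C w).prod by
    rw [this, roots_multiset_prod_X_sub_C]
  refine Polynomial.funext fun x ↦ ?_
  have haeval : scalar n x - aeval M q = aeval M (C x - q) := by
    simp [algebraMap_eq_diagonal]
  rw [eval_charpoly, haeval, det_aeval_eq_prod_roots_charpoly, eval_multiset_prod]
  simp

lemma roots_charpoly_pow (M : Matrix n n K) (m : ℕ) :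
    (M ^ m).charpoly.roots = M.charpoly.roots.map fun z ↦ z ^ m := by
  simpa using roots_charpoly_aeval M (X ^ m)

end SpectralMapping

/-- The power sum `∑ z ^ m` over the elements `z` of `s`, counted with multiplicity. For the
eigenvalues of a matrix `M` it is the trace of `M ^ m`. -/
def powerSum {R : Type*} [CommSemiring R] (s : Multiset R) (m : ℕ) : R :=
  (s.map fun z ↦ z ^ m).sum

lemma trace_pow_eq_powerSum {K n : Type*} [Field K] [IsAlgClosed K] [Fintype n] [DecidableEq n]
    (M : Matrix n n K) (m : ℕ) : (M ^ m).trace = powerSum M.charpoly.roots m := by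
  rw [trace_eq_sum_roots_charpoly, roots_charpoly_pow, powerSum]

section Recurrence

open Filter Topology

lemma frequently_mul_norm_pow_le_re_pow (s : Finset ℂ) {c : ℝ} (hc : c < 1) :
    ∃ᶠ m : ℕ in atTop, ∀ z ∈ s, c * ‖z‖ ^ m ≤ (z ^ m).re := by
  let u : ℂ → Circle := fun z ↦ Circle.exp z.arg
  have hu (z : ℂ) (m : ℕ) : z ^ m = (‖z‖ ^ m : ℝ) * (u z ^ m : Circle) := by
    conv_lhs => rw [← Complex.norm_mul_exp_arg_mul_I z, mul_pow]
    simp [u]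
  have hre : ∀ᶠ v : ℂ → Circle in 𝓝 1, ∀ z ∈ s, c < (v z : ℂ).re := by
    refine (eventually_all_finset s).2 fun z _ ↦ ?_
    have hcont : Continuous fun v : ℂ → Circle ↦ (v z : ℂ).re := by fun_prop
    exact hcont.continuousAt.eventually_const_lt (by simpa using hc)
  refine ((mapClusterPt_one_atTop_pow u).frequently hre).mono fun m hm z hz ↦ ?_
  rw [hu, Complex.re_ofReal_mul, mul_comm]
  exact mul_le_mul_of_nonneg_left (hm z hz).le (by positivity)

lemma frequently_mul_powerSum_norm_le_re_powerSum (s : Multiset ℂ) {c : ℝ} (hc : c < 1) :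
    ∃ᶠ m : ℕ in atTop, c * powerSum (s.map norm) m ≤ (powerSum s m).re := by
  refine (frequently_mul_norm_pow_le_re_pow s.toFinset hc).mono fun m hm ↦ ?_
  have hre : (powerSum s m).re = (s.map fun z ↦ (z ^ m).re).sum := by
    simpa [powerSum] using map_multiset_sum Complex.reAddGroupHom (s.map fun z ↦ z ^ m)
  rw [hre, powerSum, Multiset.map_map, ← Multiset.sum_map_mul_left]
  exact Multiset.sum_map_le_sum_map _ _ fun z hz ↦ hm z (Multiset.mem_toFinset.2 hz)

lemma norm_pow_le_powerSum_norm {s : Multiset ℂ} {z : ℂ} (hz : z ∈ s) (m : ℕ) :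
    ‖z‖ ^ m ≤ powerSum (s.map norm) m := by
  refine Multiset.single_le_sum (by simp) _ ?_
  simpa using ⟨z, hz, rfl⟩

lemma card_filter_one_le_norm_le_powerSum_norm (s : Multiset ℂ) (m : ℕ) :
    ((s.filter (1 ≤ ‖·‖)).card : ℝ) ≤ powerSum (s.map norm) m := by
  induction s using Multiset.induction_on with
  | empty => simp [powerSum]
  | cons a s ih =>
    have hcons : powerSum ((a ::ₘ s).map norm) m = ‖a‖ ^ m + powerSum (s.map norm) m := by
      simp [powerSum]
    rw [hcons, Multiset.filter_cons, Multiset.card_add, Nat.cast_add]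
    gcongr
    split_ifs with ha
    · simpa using one_le_pow₀ ha
    · simp

theorem norm_le_one_of_re_powerSum_le {s : Multiset ℂ} {B : ℝ}
    (hB : ∀ᶠ m in atTop, (powerSum s m).re ≤ B) {z : ℂ} (hz : z ∈ s) : ‖z‖ ≤ 1 := by
  by_contra! hz1
  have hlarge : ∀ᶠ m in atTop, 2 * B < ‖z‖ ^ m :=
    (tendsto_pow_atTop_atTop_of_one_lt hz1).eventually_gt_atTop _
  obtain ⟨m, hm, hmB, hmz⟩ := ((frequently_mul_powerSum_norm_le_re_powerSum s
    (c := 1 / 2) (by norm_num)).and_eventually (hB.and hlarge)).exists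
  linarith [norm_pow_le_powerSum_norm hz m]

theorem card_filter_one_le_norm_le_of_tendsto {s : Multiset ℂ} {b : ℕ → ℝ} {L : ℝ}
    (hb : Tendsto b atTop (𝓝 L)) (h : ∀ m, (powerSum s m).re ≤ b m) :
    ((s.filter (1 ≤ ‖·‖)).card : ℝ) ≤ L := by
  set N : ℝ := ((s.filter (1 ≤ ‖·‖)).card : ℝ)
  have hmul : ∀ c ∈ Set.Ioo (0 : ℝ) 1, c * N ≤ L := fun c hc ↦
    ge_of_tendsto_of_frequently hb <|
      (frequently_mul_powerSum_norm_le_re_powerSum s hc.2).mono fun m hm ↦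
        (mul_le_mul_of_nonneg_left (card_filter_one_le_norm_le_powerSum_norm s m) hc.1.le).trans
          (hm.trans (h m))
  have hlim : Tendsto (fun c : ℝ ↦ c * N) (𝓝[<] 1) (𝓝 N) := by
    simpa using ((continuous_id.mul continuous_const).tendsto (1 : ℝ)).mono_left
      (nhdsWithin_le_nhds (s := Set.Iio 1)) (f := fun c : ℝ ↦ c * N)
  exact le_of_tendsto hlim
    (eventually_of_mem (Ioo_mem_nhdsLT zero_lt_one) hmul)

end Recurrence

section Gap

open Filter Topology
open scoped ComplexOrder

/-- A multiset of complex numbers, thought of as the eigenvalues of a matrix, is gapped if all its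
elements lie in the open unit disc, except possibly for a single `1` of multiplicity one. -/
def IsGapped (s : Multiset ℂ) : Prop :=
  s.filter (1 ≤ ‖·‖) ≤ {1}

lemma isGapped_of_count_one_le_one {s : Multiset ℂ} (hcount : s.count 1 ≤ 1)
    (hlt : ∀ z ∈ s, z ≠ 1 → ‖z‖ < 1) : IsGapped s := by
  have hfilter : s.filter (1 ≤ ‖·‖) = s.filter (· = 1) :=
    Multiset.filter_congr fun z hz ↦
      ⟨fun h ↦ by_contra fun hne ↦ (hlt z hz hne).not_ge h, fun h ↦ by simp [h]⟩
  rw [IsGapped, hfilter, Multiset.filter_eq', ← Multiset.replicate_one]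
  exact Multiset.replicate_mono 1 hcount

lemma IsGapped.card_filter_one_le_norm_le_one {s : Multiset ℂ} (hs : IsGapped s) :
    (s.filter (1 ≤ ‖·‖)).card ≤ 1 := by
  simpa using Multiset.card_le_card hs

lemma IsGapped.card_filter_norm_eq_one_le_one {s : Multiset ℂ} (hs : IsGapped s) :
    (s.filter (‖·‖ = 1)).card ≤ 1 :=
  (Multiset.card_le_card (Multiset.monotone_filter_right s fun _ h ↦ h.ge)).trans
    hs.card_filter_one_le_norm_le_one

lemma IsGapped.eq_one {s : Multiset ℂ} (hs : IsGapped s) {z : ℂ} (hz : z ∈ s)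
    (hz1 : 1 ≤ ‖z‖) : z = 1 :=
  Multiset.mem_singleton.1 (Multiset.mem_of_le hs (Multiset.mem_filter.2 ⟨hz, hz1⟩))

lemma IsGapped.map_pow {s : Multiset ℂ} (hs : IsGapped s) {k : ℕ} (hk : k ≠ 0) :
    IsGapped (s.map fun z ↦ z ^ k) := by
  have hfilter : (s.map fun z ↦ z ^ k).filter (1 ≤ ‖·‖) =
      (s.filter (1 ≤ ‖·‖)).map fun z ↦ z ^ k := by
    simp [Multiset.filter_map, one_le_pow_iff_of_nonneg (norm_nonneg _) hk]
  rw [IsGapped, hfilter]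
  simpa using Multiset.map_le_map (f := fun z : ℂ ↦ z ^ k) hs

lemma tendsto_powerSum_zero {s : Multiset ℂ} (hs : ∀ z ∈ s, ‖z‖ < 1) :
    Tendsto (powerSum s) atTop (𝓝 0) := by
  unfold powerSum
  simpa using tendsto_multiset_sum (f := fun z m ↦ z ^ m) s
    fun z hz ↦ tendsto_pow_atTop_nhds_zero_of_norm_lt_one (hs z hz)

lemma tendsto_powerSum_sub_powerSum_filter (s : Multiset ℂ) :
    Tendsto (fun m ↦ powerSum s m - powerSum (s.filter (1 ≤ ‖·‖)) m) atTop (𝓝 0) := by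
  have hsplit (m : ℕ) : powerSum s m - powerSum (s.filter (1 ≤ ‖·‖)) m =
      powerSum (s.filter fun z ↦ ¬1 ≤ ‖z‖) m := by
    rw [sub_eq_iff_eq_add', powerSum, powerSum, powerSum, ← Multiset.sum_add, ← Multiset.map_add,
      Multiset.filter_add_not]
  simp only [hsplit]
  exact tendsto_powerSum_zero fun z hz ↦ not_le.1 (Multiset.mem_filter.1 hz).2

lemma IsGapped.tendsto_powerSum {s : Multiset ℂ} (hs : IsGapped s) :
    Tendsto (powerSum s) atTop (𝓝 (s.filter (1 ≤ ‖·‖)).card) := by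
  have hfilter (m : ℕ) : powerSum (s.filter (1 ≤ ‖·‖)) m = (s.filter (1 ≤ ‖·‖)).card := by
    obtain h | h := Multiset.le_singleton.1 hs <;> simp [h, powerSum]
  simpa [hfilter] using
    (tendsto_powerSum_sub_powerSum_filter s).add_const ((s.filter (1 ≤ ‖·‖)).card : ℂ)

lemma eq_one_of_tendsto_sub_pow {z : ℂ} (hz : ‖z‖ = 1) {r : ℕ → ℂ} (hr : ∀ m, 0 ≤ r m)
    (hlim : Tendsto (fun m ↦ r m - z ^ m) atTop (𝓝 0)) : z = 1 := by
  have hnorm : Tendsto (fun m ↦ ‖r m‖) atTop (𝓝 1) := by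
    rw [tendsto_iff_norm_sub_tendsto_zero]
    refine squeeze_zero (fun _ ↦ norm_nonneg _) (fun m ↦ ?_) (by simpa using hlim.norm)
    simpa [hz] using abs_norm_sub_norm_le (r m) (z ^ m)
  have hr_lim : Tendsto r atTop (𝓝 1) := by
    simpa [Function.comp_def, Complex.norm_of_nonneg', hr] using
      (Complex.continuous_ofReal.tendsto 1).comp hnorm
  have hpow : Tendsto (fun m ↦ z ^ m) atTop (𝓝 1) := by
    simpa using hr_lim.sub hlim
  have hsucc : Tendsto (fun m ↦ z ^ (m + 1)) atTop (𝓝 z) := by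
    simpa [pow_succ] using hpow.mul_const z
  exact tendsto_nhds_unique hsucc (hpow.comp (tendsto_add_atTop_nat 1))

lemma isGapped_of_powerSum_nonneg {s : Multiset ℂ} (hnorm : ∀ z ∈ s, ‖z‖ ≤ 1)
    (hcard : (s.filter (1 ≤ ‖·‖)).card ≤ 1) (hs : ∀ m, 0 ≤ powerSum s m) : IsGapped s := by
  obtain hzero | hone := Nat.le_one_iff_eq_zero_or_eq_one.1 hcard
  · simp [IsGapped, Multiset.card_eq_zero.1 hzero]
  · obtain ⟨z, hz⟩ := Multiset.card_eq_one.1 hone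
    obtain ⟨hmem, hz1⟩ := Multiset.mem_filter.1 (hz ▸ Multiset.mem_singleton_self z)
    have hlim := tendsto_powerSum_sub_powerSum_filter s
    simp only [hz, powerSum, Multiset.map_singleton, Multiset.sum_singleton] at hlim
    rw [IsGapped, hz, eq_one_of_tendsto_sub_pow ((hnorm z hmem).antisymm hz1) hs hlim]

theorem IsGapped.of_powerSum_le_sq {s t : Multiset ℂ} (ht : IsGapped t)
    (hs : ∀ m, 0 ≤ powerSum s m) (hst : ∀ m, powerSum s m ≤ powerSum t m ^ 2) : IsGapped s := by
  have hlim : Tendsto (fun m ↦ (powerSum t m ^ 2).re) atTop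
      (𝓝 ((t.filter (1 ≤ ‖·‖)).card ^ 2 : ℝ)) := by
    have h := (Complex.continuous_re.tendsto _).comp (ht.tendsto_powerSum.pow 2)
    exact_mod_cast h
  have hre (m : ℕ) : (powerSum s m).re ≤ (powerSum t m ^ 2).re :=
    (Complex.le_def.1 (hst m)).1
  have hbound : ∀ᶠ m in atTop, (powerSum s m).re ≤ (t.filter (1 ≤ ‖·‖)).card ^ 2 + 1 :=
    (hlim.eventually_le_const (lt_add_one _)).mono fun m hm ↦ (hre m).trans hm
  have hcard : (s.filter (1 ≤ ‖·‖)).card ≤ (t.filter (1 ≤ ‖·‖)).card ^ 2 := by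
    exact_mod_cast card_filter_one_le_norm_le_of_tendsto hlim hre
  exact isGapped_of_powerSum_nonneg (fun z hz ↦ norm_le_one_of_re_powerSum_le hbound hz)
    (hcard.trans (pow_le_one₀ zero_le ht.card_filter_one_le_norm_le_one)) hs

end Gap

section Ladder

open scoped ComplexOrder

variable {ι ι' κ κ' n : Type*} [Fintype ι] [Fintype ι']

lemma trace_sq_le_sq_trace_of_posSemidef [Fintype n] {P : Matrix n n ℂ} (hP : P.PosSemidef) :
    (P ^ 2).trace ≤ P.trace ^ 2 := by
  rw [trace_pow_eq_powerSum, trace_eq_sum_roots_charpoly, powerSum,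
    hP.isHermitian.roots_charpoly_eq_eigenvalues, Multiset.map_map]
  exact Finset.sum_sq_le_sq_sum_of_nonneg fun i _ ↦
    Complex.zero_le_real.2 (hP.eigenvalues_nonneg i)

/-- The two-layer transfer matrix `∑ x, B x y ⊗ₖ conj (B x y')` pairing column `y` of the
matrix-valued array `B` with column `y'`. -/
noncomputable def columnTransfer (B : ι → κ → Matrix n n ℂ) (y y' : κ) :
    Matrix (n × n) (n × n) ℂ :=
  ∑ x, B x y ⊗ₖ (B x y').map star

/-- `M` and `N` are the four-layer and the two-layer contraction of one matrix-valued array `B`.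
In the tensor network of `M`, the row indices of `B` join each ket layer to its own bra layer and
the column indices join it to the other one. -/
def IsLadderPair (M : Matrix ((n × n) × (n × n)) ((n × n) × (n × n)) ℂ)
    (N : Matrix (n × n) (n × n) ℂ) : Prop :=
  ∃ (ι κ : Type) (_ : Fintype ι) (_ : Fintype κ) (B : ι → κ → Matrix n n ℂ),
    M = ∑ y, ∑ y', columnTransfer B y y' ⊗ₖ columnTransfer B y' y ∧
    N = ∑ y, columnTransfer B y y

lemma map_star_mul [Fintype n] {R : Type*} [CommSemiring R] [StarRing R] (X Y : Matrix n n R) :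
    (X * Y).map star = X.map star * Y.map star :=
  Matrix.map_mul (f := starRingEnd R)

lemma columnTransfer_mul [Fintype n] (B : ι → κ → Matrix n n ℂ) (B' : ι' → κ' → Matrix n n ℂ)
    (y y' : κ × κ') :
    columnTransfer (fun (x : ι × ι') (y : κ × κ') ↦ B x.1 y.1 * B' x.2 y.2) y y' =
      columnTransfer B y.1 y'.1 * columnTransfer B' y.2 y'.2 := by
  simp only [columnTransfer, map_star_mul, mul_kronecker_mul, Finset.sum_mul_sum,
    Fintype.sum_prod_type]

lemma posSemidef_trace_columnTransfer [Finite κ] [Fintype n] (B : ι → κ → Matrix n n ℂ) :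
    (of fun y y' ↦ (columnTransfer B y y').trace).PosSemidef := by
  convert posSemidef_conjTranspose_mul_self (of fun x y ↦ star (B x y).trace) using 1
  have htrace (X : Matrix n n ℂ) : (X.map star).trace = star X.trace := by simp [Matrix.trace]
  ext y y'
  simp only [columnTransfer, trace_sum, trace_kronecker, htrace, of_apply, mul_apply,
    conjTranspose_apply, star_star]

namespace IsLadderPair

variable {M M' : Matrix ((n × n) × (n × n)) ((n × n) × (n × n)) ℂ}
  {N N' : Matrix (n × n) (n × n) ℂ}

lemma mul [Fintype n] (h : IsLadderPair M N) (h' : IsLadderPair M' N') :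
    IsLadderPair (M * M') (N * N') := by
  obtain ⟨ι, κ, _, _, B, rfl, rfl⟩ := h
  obtain ⟨ι', κ', _, _, B', rfl, rfl⟩ := h'
  refine ⟨ι × ι', κ × κ', inferInstance, inferInstance,
    fun x y ↦ B x.1 y.1 * B' x.2 y.2, ?_, ?_⟩ <;>
  simp only [columnTransfer_mul, mul_kronecker_mul, Finset.sum_mul_sum, Fintype.sum_prod_type]

lemma one [DecidableEq n] :
    IsLadderPair (1 : Matrix ((n × n) × (n × n)) ((n × n) × (n × n)) ℂ) 1 :=
  ⟨Unit, Unit, inferInstance, inferInstance, fun _ _ ↦ 1,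
    by simp [columnTransfer], by simp [columnTransfer]⟩

variable [Fintype n]

lemma pow [DecidableEq n] (h : IsLadderPair M N) (m : ℕ) : IsLadderPair (M ^ m) (N ^ m) := by
  induction m with
  | zero => simpa using one
  | succ m ih => simpa only [pow_succ] using ih.mul h

lemma exists_trace_eq_of_posSemidef (h : IsLadderPair M N) :
    ∃ (κ : Type) (_ : Fintype κ) (G : Matrix κ κ ℂ),
      G.PosSemidef ∧ M.trace = (G ^ 2).trace ∧ N.trace = G.trace := by
  obtain ⟨ι, κ, _, _, B, rfl, rfl⟩ := h
  refine ⟨κ, inferInstance, _, posSemidef_trace_columnTransfer B, ?_, ?_⟩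
  · simp_rw [trace_sum, trace_kronecker, sq, Matrix.trace, diag_apply, mul_apply, of_apply]
  · simp_rw [trace_sum]
    rfl

lemma trace_nonneg (h : IsLadderPair M N) : 0 ≤ M.trace := by
  obtain ⟨κ, _, G, hG, hM, -⟩ := h.exists_trace_eq_of_posSemidef
  exact hM ▸ (hG.pow 2).trace_nonneg

lemma trace_le_sq_trace (h : IsLadderPair M N) : M.trace ≤ N.trace ^ 2 := by
  obtain ⟨κ, _, G, hG, hM, hN⟩ := h.exists_trace_eq_of_posSemidef
  exact hM ▸ hN ▸ trace_sq_le_sq_trace_of_posSemidef hG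

theorem isGapped [DecidableEq n] (h : IsLadderPair M N) (hN : IsGapped N.charpoly.roots) :
    IsGapped M.charpoly.roots :=
  hN.of_powerSum_le_sq
    (fun m ↦ trace_pow_eq_powerSum M m ▸ (h.pow m).trace_nonneg)
    (fun m ↦ trace_pow_eq_powerSum M m ▸ trace_pow_eq_powerSum N m ▸ (h.pow m).trace_le_sq_trace)

end IsLadderPair

end Ladder

section TwistedTransfer

variable {d D : ℕ} (A : Fin d → Matrix (Fin D) (Fin D) ℂ)

/-- The permutation `((a, b), (c, e)) ↦ ((a, e), (c, b))`, whose permutation matrix is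
`partialSwap`. -/
def swapSnd (n : Type*) : Equiv.Perm ((n × n) × (n × n)) where
  toFun p := ((p.1.1, p.2.2), (p.2.1, p.1.2))
  invFun p := ((p.1.1, p.2.2), (p.2.1, p.1.2))
  left_inv _ := rfl
  right_inv _ := rfl

lemma partialSwap_eq_permMatrix (D : ℕ) : partialSwap D = (swapSnd (Fin D)).permMatrix ℂ := by
  ext x y
  have hswap : swapSnd (Fin D) x = y ↔
      x.1.1 = y.1.1 ∧ x.2.1 = y.2.1 ∧ x.1.2 = y.2.2 ∧ x.2.2 = y.1.2 := by
    simp only [swapSnd, Equiv.coe_fn_mk, Prod.ext_iff]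
    tauto
  simp only [partialSwap, Equiv.Perm.permMatrix, PEquiv.toMatrix_apply, Equiv.toPEquiv_apply,
    Option.mem_def, Option.some.injEq, hswap]

lemma partialSwap_mul_mul_partialSwap
    (M : Matrix ((Fin D × Fin D) × (Fin D × Fin D)) ((Fin D × Fin D) × (Fin D × Fin D)) ℂ) :
    partialSwap D * M * partialSwap D = M.submatrix (swapSnd (Fin D)) (swapSnd (Fin D)) := by
  rw [partialSwap_eq_permMatrix, PEquiv.toMatrix_toPEquiv_mul, PEquiv.mul_toMatrix_toPEquiv]
  rfl

lemma isLadderPair_mpsTransfer :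
    IsLadderPair (mpsTransfer A ⊗ₖ mpsTransfer A) (mpsTransfer A) :=
  ⟨Fin d, Unit, inferInstance, inferInstance, fun i _ ↦ A i,
    by simp [columnTransfer, mpsTransfer], by simp [columnTransfer, mpsTransfer]⟩

lemma isLadderPair_partialSwap_mul_mul_partialSwap :
    IsLadderPair (partialSwap D * (mpsTransfer A ⊗ₖ mpsTransfer A) * partialSwap D)
      (mpsTransfer A) := by
  refine ⟨Unit, Fin d, inferInstance, inferInstance, fun _ i ↦ A i, ?_, ?_⟩
  · rw [partialSwap_mul_mul_partialSwap]
    ext p q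
    simp only [submatrix_apply, swapSnd, Equiv.coe_fn_mk, columnTransfer, mpsTransfer,
      Matrix.sum_apply, kroneckerMap_apply, Finset.sum_mul_sum, Finset.univ_unique,
      Finset.sum_singleton, map_apply]
    exact Finset.sum_congr rfl fun i _ ↦ Finset.sum_congr rfl fun j _ ↦ by ring
  · simp [columnTransfer, mpsTransfer]

lemma isLadderPair_twistedTransfer {k : ℕ} (hk : k ≠ 0) :
    IsLadderPair (twistedTransfer k A) (mpsTransfer A ^ k) := by
  have h := ((isLadderPair_mpsTransfer A).pow (k - 1)).mul
    (isLadderPair_partialSwap_mul_mul_partialSwap A)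
  rw [← pow_succ, Nat.sub_one_add_one hk] at h
  simpa only [twistedTransfer, Matrix.mul_assoc] using h

theorem twistedTransfer_at_most_one_peripheral_eigenvalue_general
    (hA : IsGapped (mpsTransfer A).charpoly.roots) {k : ℕ} (hk : k ≠ 0) :
    IsGapped (twistedTransfer k A).charpoly.roots := by
  refine (isLadderPair_twistedTransfer A hk).isGapped ?_
  rw [roots_charpoly_pow]
  exact hA.map_pow hk

end TwistedTransfer

/-- At most one peripheral eigenvalue of the twisted transfer operator: if the transfer matrix
`T` is gapped and normalized (its characteristic polynomial has `1` as a root of multiplicity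
one and every other root has modulus `< 1`), then for `k ≥ 2` the twisted transfer operator
`T̂_k` has at most one eigenvalue of modulus `1` (with multiplicity), and every such eigenvalue
equals `1`. -/
theorem twistedTransfer_at_most_one_peripheral_eigenvalue
    (d D : ℕ) (hd : 1 ≤ d) (hD : 1 ≤ D)
    (A : Fin d → Matrix (Fin D) (Fin D) ℂ)
    (h1 : Polynomial.rootMultiplicity 1 (mpsTransfer A).charpoly = 1)
    (h2 : ∀ z ∈ (mpsTransfer A).charpoly.roots, z ≠ 1 → ‖z‖ < 1)
    (k : ℕ) (hk : 2 ≤ k) :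
    ((twistedTransfer k A).charpoly.roots.filter (fun z => ‖z‖ = 1)).card ≤ 1 ∧
    ∀ z ∈ (twistedTransfer k A).charpoly.roots, ‖z‖ = 1 → z = 1 := by
  have hT : IsGapped (mpsTransfer A).charpoly.roots :=
    isGapped_of_count_one_le_one (by rw [Polynomial.count_roots, h1]) h2
  have hk0 : k ≠ 0 := by lia
  have hgap := twistedTransfer_at_most_one_peripheral_eigenvalue_general A hT hk0
  exact ⟨hgap.card_filter_norm_eq_one_le_one, fun z hz hz1 ↦ hgap.eq_one hz hz1.ge⟩
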